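/- arXiv:1409.3142 — 2 statements merged into one kernel-verified Lean document; each statement's English description precedes it below -/
import Mathlib

section
/- (Equivalent Cartan cocycles induce equivalent moment maps) Let n ≥ 1. For i = 0,1 let ω^i ∈ Ω^{n+1} be invariant with dω^i = 0, and let μ^i : 𝔤 → Ω^{n−1} be linear and equivariant with d(μ^i(x)) = −ι_{v_x}ω^i and ι_{v_x}(μ^i(x)) = 0 for all x ∈ 𝔤. Suppose there exist an invariant α ∈ Ω^n and a linear equivariant F : 𝔤 → Ω^{n−2} such that ω^1 − ω^0 = dα, μ^1(x) − μ^0(x) = ι_{v_x}α − d(F(x)) for all x ∈ 𝔤, and ι_{v_x}(F(x)) = 0 for all x ∈ 𝔤. Then for every 1 ≤ k ≤ n and all x_1,…,x_k ∈ 𝔤: (μ^1)_k(x_1,…,x_k) − (μ^0)_k(x_1,…,x_k) = (−1)^{k−1}·α_k(x_1,…,x_k) + (d_𝔤F_{k−1})(x_1,…,x_k) + (−1)^k·d(F_k(x_1,…,x_k)) (with F_0 := 0); that is, (μ^1)~ − (μ^0)~ = α̃ + d_tot F̃, so the homotopy moment maps induced by μ^0 and μ^1 are equivalent via η := F̃ and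 α. -/
/-- Cartan calculus data over ℝ: a module `carrier` with graded pieces `deg i`
(`deg i = ⊥` for `i < 0`), a degree-`+1` differential `d` squaring to zero,
a real Lie algebra `X`, contractions `ι v` of degree `-1` depending linearly on `v`,
pairwise anticommuting, and satisfying the Cartan relation
`𝓛_v ∘ ι_w - ι_w ∘ 𝓛_v = ι_[v,w]` where `𝓛_v = d ∘ ι_v + ι_v ∘ d`. -/
structure CartanCalculus where
  carrier : Type
  [addCommGroup : AddCommGroup carrier]
  [module : Module ℝ carrier]
  deg : ℤ → Submodule ℝ carrier
  deg_neg : ∀ i : ℤ, i < 0 → deg i = ⊥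
  d : carrier →ₗ[ℝ] carrier
  d_deg : ∀ i : ℤ, ∀ a ∈ deg i, d a ∈ deg (i + 1)
  d_d : ∀ a : carrier, d (d a) = 0
  X : Type
  [lieRingX : LieRing X]
  [lieAlgebraX : LieAlgebra ℝ X]
  ι : X →ₗ[ℝ] carrier →ₗ[ℝ] carrier
  ι_deg : ∀ (v : X) (i : ℤ), ∀ a ∈ deg i, ι v a ∈ deg (i - 1)
  ι_ι : ∀ (v w : X) (a : carrier), ι v (ι w a) = - ι w (ι v a)
  cartan : ∀ (v w : X) (a : carrier),
      (d (ι v (ι w a)) + ι v (d (ι w a))) - ι w (d (ι v a) + ι v (d a)) = ι ⁅v, w⁆ a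

attribute [instance] CartanCalculus.addCommGroup CartanCalculus.module
  CartanCalculus.lieRingX CartanCalculus.lieAlgebraX

namespace CartanCalculus

/-- The Lie derivative `𝓛_v = d ∘ ι_v + ι_v ∘ d`. -/
def L (C : CartanCalculus) (v : C.X) : C.carrier →ₗ[ℝ] C.carrier :=
  C.d ∘ₗ C.ι v + C.ι v ∘ₗ C.d

/-- Iterated contraction: `iotaL [v₁, …, v_k] = ι_{v_k} ∘ ⋯ ∘ ι_{v₁}`, i.e. the
contraction `ι(v₁ ∧ ⋯ ∧ v_k)` (`ι_{v₁}` acts first). -/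
def iotaL (C : CartanCalculus) : List C.X → C.carrier →ₗ[ℝ] C.carrier
  | [] => LinearMap.id
  | v :: vs => (C.iotaL vs).comp (C.ι v)

end CartanCalculus

/-- Interpret a list as a `Fin k`-tuple (junk value `0` out of range). -/
def listToFun {α : Type} [Zero α] (k : ℕ) (l : List α) : Fin k → α :=
  fun m => l.getD m.val 0

/-- A map `𝔤^k → W` is multilinear. -/
def IsMultilinear {𝔤 : Type} [AddCommGroup 𝔤] [Module ℝ 𝔤] {W : Type}
    [AddCommGroup W] [Module ℝ W] {k : ℕ} (ψ : (Fin k → 𝔤) → W) : Prop :=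
  ∀ (x : Fin k → 𝔤) (i : Fin k),
    (∀ a b : 𝔤, ψ (Function.update x i (a + b))
        = ψ (Function.update x i a) + ψ (Function.update x i b)) ∧
    (∀ (c : ℝ) (a : 𝔤), ψ (Function.update x i (c • a)) = c • ψ (Function.update x i a))

/-- A map `𝔤^k → W` is alternating. -/
def IsAlternating {𝔤 : Type} {W : Type} [AddCommGroup W] {k : ℕ}
    (ψ : (Fin k → 𝔤) → W) : Prop :=
  ∀ (x : Fin k → 𝔤) (i j : Fin k), i ≠ j → x i = x j → ψ x = 0

/-- The Chevalley–Eilenberg differential of a `k`-cochain `ψ`: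
`(d_𝔤 ψ)(x₁,…,x_{k+1}) = Σ_{i<j} (-1)^{i+j} ψ([x_i,x_j], x₁, …, x̂_i, …, x̂_j, …, x_{k+1})`
(signs written for 1-based indices, as in the paper). -/
def dCE {𝔤 : Type} [LieRing 𝔤] [LieAlgebra ℝ 𝔤] {W : Type} [AddCommGroup W]
    [Module ℝ W] (k : ℕ) (ψ : (Fin k → 𝔤) → W) : (Fin (k + 1) → 𝔤) → W :=
  fun x => ∑ i : Fin (k + 1), ∑ j : Fin (k + 1),
    if (i : ℕ) < (j : ℕ) then
      ((-1 : ℝ) ^ ((i : ℕ) + (j : ℕ))) •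
        ψ (listToFun k (⁅x i, x j⁆ :: (((List.ofFn x).eraseIdx (j : ℕ)).eraseIdx (i : ℕ))))
    else 0

namespace CartanCalculus

/-- `σ_k(x₁,…,x_k) = ι(v_{x₁} ∧ ⋯ ∧ v_{x_k}) σ` where `v_x = ρ x`. -/
def lower (C : CartanCalculus) {𝔤 : Type} [LieRing 𝔤] [LieAlgebra ℝ 𝔤]
    (ρ : 𝔤 →ₗ⁅ℝ⁆ C.X) (k : ℕ) (σ : C.carrier) : (Fin k → 𝔤) → C.carrier :=
  fun x => C.iotaL (List.ofFn (fun i => ρ (x i))) σ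

/-- `F_k(x₁,…,x_k) = ι(v_{x₁} ∧ ⋯ ∧ v_{x_{k-1}}) (F x_k)`, with `F₀ := 0`. -/
def lowerF (C : CartanCalculus) {𝔤 : Type} [LieRing 𝔤] [LieAlgebra ℝ 𝔤]
    (ρ : 𝔤 →ₗ⁅ℝ⁆ C.X) (F : 𝔤 → C.carrier) : (k : ℕ) → (Fin k → 𝔤) → C.carrier
  | 0 => fun _ => 0
  | (k + 1) => fun x =>
      C.iotaL (List.ofFn (fun i : Fin k => ρ (x i.castSucc))) (F (x (Fin.last k)))

end CartanCalculus

/-- `ς(k) = -(-1)^{k(k+1)/2}`. -/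
def varsigma (k : ℕ) : ℝ := -((-1 : ℝ) ^ (k * (k + 1) / 2))

/-- A homotopy moment map for the invariant closed form `ω ∈ Ω^{n+1}`
(componentwise form of Def. 5.1 in [FRZ]): a family of alternating multilinear maps
`f_k : 𝔤^k → Ω^{n-k}` (`k = 1, …, n`) satisfying the moment map equations. -/
def IsMomentMap (C : CartanCalculus) {𝔤 : Type} [LieRing 𝔤] [LieAlgebra ℝ 𝔤]
    (ρ : 𝔤 →ₗ⁅ℝ⁆ C.X) (n : ℕ) (ω : C.carrier)
    (f : (k : ℕ) → (Fin k → 𝔤) → C.carrier) : Prop :=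
  (∀ k : ℕ, 1 ≤ k → k ≤ n →
      IsMultilinear (f k) ∧ IsAlternating (f k) ∧ ∀ x, f k x ∈ C.deg ((n : ℤ) - (k : ℤ))) ∧
  (∀ x : 𝔤, C.d (f 1 (fun _ => x)) = - C.ι (ρ x) ω) ∧
  (∀ k : ℕ, 2 ≤ k → k ≤ n → ∀ x : Fin k → 𝔤,
      (∑ i : Fin k, ∑ j : Fin k,
        if (i : ℕ) < (j : ℕ) then
          ((-1 : ℝ) ^ ((i : ℕ) + (j : ℕ) + 1)) •
            f (k - 1) (listToFun (k - 1)
              (⁅x i, x j⁆ :: (((List.ofFn x).eraseIdx (j : ℕ)).eraseIdx (i : ℕ))))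
        else 0)
      = C.d (f k x) + varsigma k • C.lower ρ k ω x) ∧
  (∀ x : Fin (n + 1) → 𝔤,
      (∑ i : Fin (n + 1), ∑ j : Fin (n + 1),
        if (i : ℕ) < (j : ℕ) then
          ((-1 : ℝ) ^ ((i : ℕ) + (j : ℕ) + 1)) •
            f n (listToFun n
              (⁅x i, x j⁆ :: (((List.ofFn x).eraseIdx (j : ℕ)).eraseIdx (i : ℕ))))
        else 0)
      = varsigma (n + 1) • C.lower ρ (n + 1) ω x)

/-- Iterated contraction lowers the degree by the number of vectors. -/
lemma CartanCalculus.iotaL_deg (C : CartanCalculus) (l : List C.X) (i : ℤ)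
    (a : C.carrier) (ha : a ∈ C.deg i) :
    C.iotaL l a ∈ C.deg (i - (l.length : ℤ)) := by
  induction l generalizing i a with
  | nil => simpa [CartanCalculus.iotaL] using ha
  | cons v vs ih =>
      have h1 : C.ι v a ∈ C.deg (i - 1) := C.ι_deg v i a ha
      have h2 := ih (i - 1) (C.ι v a) h1
      have heq : i - 1 - (vs.length : ℤ) = i - ((v :: vs).length : ℤ) := by
        simp only [List.length_cons]
        push_cast
        ring
      have h3 : C.iotaL (v :: vs) a = C.iotaL vs (C.ι v a) := rfl
      rw [h3, ← heq]
      exact h2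

/-- The full contraction of `ω ∈ Ω^{n+1}` by `n+1` vectors lands in `Ω^0`. -/
lemma CartanCalculus.lower_mem_deg_zero (C : CartanCalculus) {𝔤 : Type} [LieRing 𝔤]
    [LieAlgebra ℝ 𝔤] (ρ : 𝔤 →ₗ⁅ℝ⁆ C.X) (n : ℕ) (ω : C.carrier)
    (hω : ω ∈ C.deg ((n : ℤ) + 1)) (x : Fin (n + 1) → 𝔤) :
    C.lower ρ (n + 1) ω x ∈ C.deg 0 := by
  have h := C.iotaL_deg (List.ofFn (fun i => ρ (x i))) ((n : ℤ) + 1) ω hω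
  have heq : (n : ℤ) + 1 - ((List.ofFn (fun i : Fin (n + 1) => ρ (x i))).length : ℤ)
      = 0 := by
    simp
  show C.iotaL (List.ofFn (fun i => ρ (x i))) ω ∈ C.deg 0
  rw [← heq]
  exact h

/-- The cochain `c : 𝔤^{n+1} → ℝ`, `c(x₁,…,x_{n+1}) = ε(ι(v_{x₁}∧⋯∧v_{x_{n+1}})ω)`,
i.e. `(-1)^n ω_{n+1}` evaluated by `ε : Ω^0 → ℝ` (without the sign). -/
def obstructionCocycle (C : CartanCalculus) {𝔤 : Type} [LieRing 𝔤] [LieAlgebra ℝ 𝔤]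
    (ρ : 𝔤 →ₗ⁅ℝ⁆ C.X) (n : ℕ) (ω : C.carrier) (hω : ω ∈ C.deg ((n : ℤ) + 1))
    (ε : C.deg 0 →ₗ[ℝ] ℝ) : (Fin (n + 1) → 𝔤) → ℝ :=
  fun x => ε ⟨C.lower ρ (n + 1) ω x, C.lower_mem_deg_zero ρ n ω hω x⟩

namespace EqCC

variable {𝔤 : Type} [LieRing 𝔤] [LieAlgebra ℝ 𝔤]

/-- List version of the Chevalley–Eilenberg differential. -/
noncomputable def E {W : Type} [AddCommGroup W] [Module ℝ W] (ψ : List 𝔤 → W) (l : List 𝔤) : W :=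
  ∑ i ∈ Finset.range l.length, ∑ j ∈ Finset.range l.length,
    if i < j then ((-1 : ℝ) ^ (i + j)) •
      ψ (⁅l.getD i 0, l.getD j 0⁆ :: ((l.eraseIdx j).eraseIdx i)) else 0

lemma E_cons {W : Type} [AddCommGroup W] [Module ℝ W] (ψ : List 𝔤 → W) (x : 𝔤) (l : List 𝔤) :
    E ψ (x :: l) = (∑ j ∈ Finset.range l.length,
        ((-1 : ℝ) ^ (j + 1)) • ψ (⁅x, l.getD j 0⁆ :: l.eraseIdx j))
      + E (fun m => match m with
          | [] => 0
          | b :: m => ψ (b :: x :: m)) l := by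
  unfold E
  rw [List.length_cons, Finset.sum_range_succ', add_comm]
  congr 1
  · rw [Finset.sum_range_succ']
    simp
  · refine Finset.sum_congr rfl fun i _ => ?_
    rw [Finset.sum_range_succ']
    simp only [not_lt_zero', if_false, add_zero, Nat.add_lt_add_iff_right]
    refine Finset.sum_congr rfl fun j _ => ?_
    split_ifs with h
    · rw [show i + 1 + (j + 1) = i + j + 2 by ring, pow_add]
      simp
    · rfl

lemma E_snoc {W : Type} [AddCommGroup W] [Module ℝ W] (ψ : List 𝔤 → W) (y : 𝔤) (l : List 𝔤) :
    E ψ (l ++ [y]) = E (fun m => ψ (m ++ [y])) l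
      + ∑ i ∈ Finset.range l.length,
        ((-1 : ℝ) ^ (i + l.length)) • ψ (⁅l.getD i 0, y⁆ :: l.eraseIdx i) := by
  unfold E
  rw [List.length_append, List.length_singleton, Finset.sum_range_succ]
  have hz : ∑ j ∈ Finset.range (l.length + 1), (if l.length < j then ((-1 : ℝ) ^ (l.length + j)) •
      ψ (⁅(l ++ [y]).getD l.length 0, (l ++ [y]).getD j 0⁆ ::
        (((l ++ [y]).eraseIdx j).eraseIdx l.length)) else 0) = 0 := by
    refine Finset.sum_eq_zero fun j hj => ?_
    rw [if_neg]
    have := Finset.mem_range.1 hj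
    omega
  rw [hz, add_zero, ← Finset.sum_add_distrib]
  refine Finset.sum_congr rfl fun i hi => ?_
  have hi := Finset.mem_range.1 hi
  rw [Finset.sum_range_succ]
  congr 1
  · refine Finset.sum_congr rfl fun j hj => ?_
    have hj := Finset.mem_range.1 hj
    split_ifs with h
    · rw [List.getD_append _ _ _ _ hi, List.getD_append _ _ _ _ hj,
        List.eraseIdx_append_of_lt_length hj, List.eraseIdx_append_of_lt_length]
      · rfl
      · rw [List.length_eraseIdx_of_lt hj]; omega
    · rfl
  · rw [if_pos hi, List.getD_append _ _ _ _ hi]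
    simp [List.eraseIdx_append_of_length_le]

lemma E_congr {W : Type} [AddCommGroup W] [Module ℝ W] (ψ φ : List 𝔤 → W) (l : List 𝔤)
    (h : ∀ b m, (b :: m).length + 1 = l.length → ψ (b :: m) = φ (b :: m)) : E ψ l = E φ l := by
  unfold E
  refine Finset.sum_congr rfl fun i hi => Finset.sum_congr rfl fun j hj => ?_
  have hi := Finset.mem_range.1 hi
  have hj := Finset.mem_range.1 hj
  split_ifs with hij
  · rw [h]
    have h1 := List.length_eraseIdx_of_lt hj
    have h2 : ((l.eraseIdx j).eraseIdx i).length = (l.eraseIdx j).length - 1 :=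
      List.length_eraseIdx_of_lt (by omega)
    rw [List.length_cons]; omega
  · rfl

lemma E_neg {W : Type} [AddCommGroup W] [Module ℝ W] (ψ : List 𝔤 → W) (l : List 𝔤) :
    E (fun m => - ψ m) l = - E ψ l := by
  unfold E
  rw [← Finset.sum_neg_distrib]
  refine Finset.sum_congr rfl fun i hi => ?_
  rw [← Finset.sum_neg_distrib]
  refine Finset.sum_congr rfl fun j hj => ?_
  split_ifs <;> simp

variable (C : CartanCalculus) (ρ : 𝔤 →ₗ⁅ℝ⁆ C.X)

/-- Contraction along a list. -/
def I (l : List 𝔤) : C.carrier →ₗ[ℝ] C.carrier := C.iotaL (l.map ρ)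

lemma I_nil (a : C.carrier) : I C ρ [] a = a := rfl

lemma I_cons (x : 𝔤) (l : List 𝔤) (a : C.carrier) :
    I C ρ (x :: l) a = I C ρ l (C.ι (ρ x) a) := rfl

lemma I_snoc (y : 𝔤) (l : List 𝔤) (a : C.carrier) :
    I C ρ (l ++ [y]) a = C.ι (ρ y) (I C ρ l a) := by
  induction l generalizing a with
  | nil => rfl
  | cons x l ih => rw [List.cons_append, I_cons, ih, I_cons]

lemma I_comm (y : 𝔤) (l : List 𝔤) (a : C.carrier) :
    I C ρ l (C.ι (ρ y) a) = ((-1 : ℝ) ^ l.length) • C.ι (ρ y) (I C ρ l a) := by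
  induction l generalizing a with
  | nil => simp [I_nil]
  | cons x l ih =>
    rw [I_cons, C.ι_ι, map_neg, ih, I_cons, List.length_cons, pow_succ]
    simp

lemma cartanL (x y : 𝔤) (a : C.carrier) :
    C.L (ρ x) (C.ι (ρ y) a) = C.ι (ρ y) (C.L (ρ x) a) + C.ι (ρ ⁅x, y⁆) a := by
  have h := C.cartan (ρ x) (ρ y) a
  rw [LieHom.map_lie, ← h]
  simp [CartanCalculus.L]

lemma cartan_formula (l : List 𝔤) (a : C.carrier) :
    ((-1 : ℝ) ^ l.length) • C.d (I C ρ l a) = I C ρ l (C.d a)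
      + E (fun m => I C ρ m a) l
      + ∑ i ∈ Finset.range l.length,
        ((-1 : ℝ) ^ (i + 1)) • I C ρ (l.eraseIdx i) (C.L (ρ (l.getD i 0)) a) := by
  induction l generalizing a with
  | nil => simp [I_nil, E]
  | cons x l ih =>
    have hE : E (fun m => match m with
          | [] => 0
          | b :: m => I C ρ (b :: x :: m) a) l
        = - E (fun m => I C ρ m (C.ι (ρ x) a)) l := by
      rw [← E_neg]
      apply E_congr
      intro b m _
      simp only [I_cons]
      rw [C.ι_ι, map_neg]
    have hL : C.d (C.ι (ρ x) a) = C.L (ρ x) a - C.ι (ρ x) (C.d a) := by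
      simp [CartanCalculus.L]
    rw [E_cons, hE, List.length_cons, Finset.sum_range_succ', pow_succ, mul_neg_one, neg_smul,
      I_cons, ih, hL, map_sub, I_cons]
    have hS : ∑ i ∈ Finset.range l.length, ((-1 : ℝ) ^ (i + 1)) •
          I C ρ (l.eraseIdx i) (C.L (ρ (l.getD i 0)) (C.ι (ρ x) a))
        = - ∑ i ∈ Finset.range l.length, ((-1 : ℝ) ^ (i + 1 + 1)) •
            I C ρ ((x :: l).eraseIdx (i + 1)) (C.L (ρ ((x :: l).getD (i + 1) 0)) a)
          - ∑ j ∈ Finset.range l.length,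
            ((-1 : ℝ) ^ (j + 1)) • I C ρ (⁅x, l.getD j 0⁆ :: l.eraseIdx j) a := by
      rw [← Finset.sum_neg_distrib, ← Finset.sum_sub_distrib]
      refine Finset.sum_congr rfl fun i _ => ?_
      rw [cartanL, List.eraseIdx_cons_succ, List.getD_cons_succ, I_cons, I_cons,
        ← lie_skew x, map_neg, map_neg, LinearMap.neg_apply, map_neg, map_add, pow_succ _ (i+1)]
      module
    rw [hS]
    simp only [zero_add, pow_one, List.eraseIdx_cons_zero, List.getD_cons_zero, neg_smul, one_smul]
    abel

/-- List version of `lowerF`. -/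
def psi (F : 𝔤 →ₗ[ℝ] C.carrier) (l : List 𝔤) : C.carrier :=
  I C ρ l.dropLast (F (l.getLastD 0))

lemma psi_snoc (F : 𝔤 →ₗ[ℝ] C.carrier) (l : List 𝔤) (y : 𝔤) :
    psi C ρ F (l ++ [y]) = I C ρ l (F y) := by
  simp [psi, List.getLastD_eq_getLast?]

lemma psi_cons (F : 𝔤 →ₗ[ℝ] C.carrier) (hc : ∀ x : 𝔤, C.ι (ρ x) (F x) = 0)
    (l : List 𝔤) (y : 𝔤) :
    psi C ρ F (y :: l) = ((-1 : ℝ) ^ l.length) • I C ρ l (F y) := by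
  have hs : ∀ x y, C.ι (ρ x) (F y) = - C.ι (ρ y) (F x) := by
    intro x y
    have h := hc (x + y)
    simp only [map_add, LinearMap.add_apply, hc, zero_add, add_zero] at h
    exact eq_neg_of_add_eq_zero_left h |> fun h => by
      first
        | exact h
        | (rw [h]; simp)
  rcases List.eq_nil_or_concat l with rfl | ⟨m, z, rfl⟩
  · simp [psi]
  · rw [List.concat_eq_append, ← List.cons_append, psi_snoc, I_cons, hs, map_neg, I_comm, I_snoc,
      List.length_append, List.length_singleton, pow_succ]
    simp

lemma lowerF_eq (F : 𝔤 →ₗ[ℝ] C.carrier) (k : ℕ) (x : Fin k → 𝔤) :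
    C.lowerF ρ (fun y => F y) k x = psi C ρ F (List.ofFn x) := by
  cases k with
  | zero => simp [CartanCalculus.lowerF, psi]
  | succ k =>
    rw [List.ofFn_succ', List.concat_eq_append, psi_snoc, CartanCalculus.lowerF, I, List.map_ofFn]
    rfl

lemma ofFn_listToFun (k : ℕ) (l : List 𝔤) (h : l.length = k) :
    List.ofFn (listToFun k l) = l := by
  subst h
  apply List.ext_getElem
  · simp
  · intro i h1 h2
    simp [listToFun, h2]

lemma dCE_eq (F : 𝔤 →ₗ[ℝ] C.carrier) (k : ℕ) (x : Fin (k + 1) → 𝔤) :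
    dCE k (C.lowerF ρ (fun y => F y) k) x = E (psi C ρ F) (List.ofFn x) := by
  unfold dCE E
  rw [List.length_ofFn, Finset.sum_range]
  refine Finset.sum_congr rfl fun i _ => ?_
  rw [Finset.sum_range]
  refine Finset.sum_congr rfl fun j _ => ?_
  split_ifs with hij
  · have hi := i.2
    have hj := j.2
    have hg : ∀ i : Fin (k + 1), (List.ofFn x).getD i 0 = x i := by
      intro i
      rw [List.getD_eq_getElem _ _ (by rw [List.length_ofFn]; exact i.2), List.getElem_ofFn]
    rw [lowerF_eq, ofFn_listToFun]
    · rw [hg, hg]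
    · have h1 : ((List.ofFn x).eraseIdx j).length = (List.ofFn x).length - 1 :=
        List.length_eraseIdx_of_lt (by rw [List.length_ofFn]; exact j.2)
      rw [List.length_ofFn] at h1
      have h2 : (((List.ofFn x).eraseIdx j).eraseIdx i).length
        = ((List.ofFn x).eraseIdx j).length - 1 :=
        List.length_eraseIdx_of_lt (by omega)
      rw [List.length_cons]; omega
  · rfl

lemma main_formula (F : 𝔤 →ₗ[ℝ] C.carrier) (hc : ∀ x : 𝔤, C.ι (ρ x) (F x) = 0)
    (hF : ∀ x y : 𝔤, C.L (ρ x) (F y) = F ⁅x, y⁆) (l : List 𝔤) (y : 𝔤) :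
    ((-1 : ℝ) ^ l.length) • C.d (I C ρ l (F y)) = I C ρ l (C.d (F y))
      + E (psi C ρ F) (l ++ [y]) := by
  rw [cartan_formula, E_snoc, add_assoc]
  congr 2
  · simp only [psi_snoc]
  · refine Finset.sum_congr rfl fun i hi => ?_
    have hi := Finset.mem_range.1 hi
    rw [psi_cons C ρ F hc, hF, smul_smul, ← pow_add, List.length_eraseIdx_of_lt hi]
    congr 1
    rw [show i + l.length + (l.length - 1) = (i + 1) + 2 * (l.length - 1) by omega,
      pow_add _ (i + 1), pow_mul]
    simp

end EqCC

/-- equivalent Cartan cocycles induce equivalent moment maps,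
Prop. 6.9 of the paper. If the Cartan cocycles `ω^i - μ^i` (`i = 0,1`) differ
by `d_G(α + F)` — i.e. `ω¹ - ω⁰ = dα`, `μ¹ x - μ⁰ x = ι_{v_x}α - d(F x)` and
`ι_{v_x}(F x) = 0` — then for every `1 ≤ k ≤ n` (written `k+1` with `k+1 ≤ n`):
`(μ¹)_{k+1} - (μ⁰)_{k+1} = (-1)^k α_{k+1} + d_𝔤 F_k + (-1)^{k+1} d F_{k+1}`
(with `F₀ := 0`); i.e. `(μ¹)~ - (μ⁰)~ = α̃ + d_tot F̃`, so the induced homotopy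
moment maps are equivalent via `η := F̃` and `α`. -/
theorem equivalent_cartan_cocycles (C : CartanCalculus) {𝔤 : Type} [LieRing 𝔤]
    [LieAlgebra ℝ 𝔤] (ρ : 𝔤 →ₗ⁅ℝ⁆ C.X) (n : ℕ) (hn : 1 ≤ n)
    (ω0 ω1 : C.carrier)
    (hω0 : ω0 ∈ C.deg ((n : ℤ) + 1)) (hω1 : ω1 ∈ C.deg ((n : ℤ) + 1))
    (hcl0 : C.d ω0 = 0) (hcl1 : C.d ω1 = 0)
    (hinv0 : ∀ x : 𝔤, C.L (ρ x) ω0 = 0) (hinv1 : ∀ x : 𝔤, C.L (ρ x) ω1 = 0)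
    (μ0 μ1 : 𝔤 →ₗ[ℝ] C.carrier)
    (hμdeg0 : ∀ x : 𝔤, μ0 x ∈ C.deg ((n : ℤ) - 1))
    (hμdeg1 : ∀ x : 𝔤, μ1 x ∈ C.deg ((n : ℤ) - 1))
    (hμequiv0 : ∀ x y : 𝔤, C.L (ρ x) (μ0 y) = μ0 ⁅x, y⁆)
    (hμequiv1 : ∀ x y : 𝔤, C.L (ρ x) (μ1 y) = μ1 ⁅x, y⁆)
    (hμmom0 : ∀ x : 𝔤, C.d (μ0 x) = - C.ι (ρ x) ω0)
    (hμmom1 : ∀ x : 𝔤, C.d (μ1 x) = - C.ι (ρ x) ω1)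
    (hμvan0 : ∀ x : 𝔤, C.ι (ρ x) (μ0 x) = 0)
    (hμvan1 : ∀ x : 𝔤, C.ι (ρ x) (μ1 x) = 0)
    (α : C.carrier) (hαdeg : α ∈ C.deg (n : ℤ)) (hαinv : ∀ x : 𝔤, C.L (ρ x) α = 0)
    (F : 𝔤 →ₗ[ℝ] C.carrier) (hFdeg : ∀ x : 𝔤, F x ∈ C.deg ((n : ℤ) - 2))
    (hFequiv : ∀ x y : 𝔤, C.L (ρ x) (F y) = F ⁅x, y⁆)
    (ha : ω1 - ω0 = C.d α)
    (hb : ∀ x : 𝔤, μ1 x - μ0 x = C.ι (ρ x) α - C.d (F x))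
    (hc : ∀ x : 𝔤, C.ι (ρ x) (F x) = 0) :
    ∀ k : ℕ, k + 1 ≤ n → ∀ x : Fin (k + 1) → 𝔤,
      C.lowerF ρ (fun y => μ1 y) (k + 1) x - C.lowerF ρ (fun y => μ0 y) (k + 1) x
        = ((-1 : ℝ) ^ k) • C.lower ρ (k + 1) α x
          + dCE k (C.lowerF ρ (fun y => F y) k) x
          + ((-1 : ℝ) ^ (k + 1)) • C.d (C.lowerF ρ (fun y => F y) (k + 1) x) := by
  intro k _ x
  rw [EqCC.dCE_eq, EqCC.lowerF_eq, EqCC.lowerF_eq, EqCC.lowerF_eq]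
  have hα : C.lower ρ (k + 1) α x = EqCC.I C ρ (List.ofFn x) α := by
    rw [CartanCalculus.lower, EqCC.I, List.map_ofFn]
    rfl
  rw [hα, List.ofFn_succ', List.concat_eq_append, EqCC.psi_snoc, EqCC.psi_snoc, EqCC.psi_snoc,
    ← map_sub, hb, map_sub, EqCC.I_snoc, EqCC.I_comm]
  have h := EqCC.main_formula C ρ F hc hFequiv (List.ofFn fun i : Fin k => x i.castSucc)
    (x (Fin.last k))
  rw [List.length_ofFn] at h ⊢
  rw [pow_succ, mul_neg_one, neg_smul, h]
  abel
end

section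
/- (Gauge shift by an invariant primitive) Let (f_1,…,f_n) be a homotopy moment map for ω and let α ∈ Ω^n be invariant (𝓛_{v_x}α = 0 for all x ∈ 𝔤). Then ω + dα satisfies d(ω + dα) = 0 and 𝓛_{v_x}(ω + dα) = 0 for all x ∈ 𝔤, and the maps f'_k := f_k + (−1)^{k−1}·ς(k)·α_k (k = 1,…,n) form a homotopy moment map for ω + dα. -/
namespace CartanCalculus

lemma iotaL_cons (C : CartanCalculus) (v : C.X) (vs : List C.X) (a : C.carrier) :
    C.iotaL (v :: vs) a = C.iotaL vs (C.ι v a) := rfl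

lemma ι_self (C : CartanCalculus) (v : C.X) (a : C.carrier) : C.ι v (C.ι v a) = 0 := by
  have h : (2 : ℝ) • C.ι v (C.ι v a) = 0 := by
    rw [two_smul]
    nth_rewrite 1 [C.ι_ι v v a]
    exact neg_add_cancel _
  exact (smul_eq_zero.mp h).resolve_left two_ne_zero

lemma iotaL_of_mem (C : CartanCalculus) (v : C.X) (vs : List C.X) (h : v ∈ vs)
    (a : C.carrier) : C.iotaL vs (C.ι v a) = 0 := by
  induction vs generalizing a with
  | nil => simp at h
  | cons w ws ih =>
    rw [iotaL_cons]
    rcases List.mem_cons.mp h with rfl | h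
    · rw [C.ι_self, map_zero]
    · rw [C.ι_ι, map_neg, ih h, neg_zero]

lemma iotaL_of_not_nodup (C : CartanCalculus) (vs : List C.X) (h : ¬ vs.Nodup)
    (a : C.carrier) : C.iotaL vs a = 0 := by
  induction vs generalizing a with
  | nil => simp at h
  | cons w ws ih =>
    rw [iotaL_cons]
    by_cases hw : w ∈ ws
    · exact C.iotaL_of_mem w ws hw a
    · exact ih (fun h2 => h (List.nodup_cons.mpr ⟨hw, h2⟩)) _

lemma iotaL_set_add (C : CartanCalculus) (vs : List C.X) (i : ℕ) (hi : i < vs.length)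
    (u w : C.X) (a : C.carrier) :
    C.iotaL (vs.set i (u + w)) a = C.iotaL (vs.set i u) a + C.iotaL (vs.set i w) a := by
  induction vs generalizing a i with
  | nil => simp at hi
  | cons z zs ih =>
    cases i with
    | zero => simp [iotaL_cons]
    | succ i => 
      simp only [List.set_cons_succ, iotaL_cons]
      exact ih i (by simpa using hi) _

lemma iotaL_set_smul (C : CartanCalculus) (vs : List C.X) (i : ℕ) (hi : i < vs.length)
    (c : ℝ) (w : C.X) (a : C.carrier) :
    C.iotaL (vs.set i (c • w)) a = c • C.iotaL (vs.set i w) a := by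
  induction vs generalizing a i with
  | nil => simp at hi
  | cons z zs ih =>
    cases i with
    | zero => simp [iotaL_cons]
    | succ i => 
      simp only [List.set_cons_succ, iotaL_cons]
      exact ih i (by simpa using hi) _

lemma L_ι (C : CartanCalculus) (v w : C.X) (a : C.carrier) :
    C.L v (C.ι w a) = C.ι w (C.L v a) + C.ι ⁅v, w⁆ a := by
  rw [← C.cartan v w a]
  simp [L]

lemma d_ι (C : CartanCalculus) (v : C.X) (a : C.carrier) :
    C.d (C.ι v a) = C.L v a - C.ι v (C.d a) := by
  simp [L]

lemma multiCartan (C : CartanCalculus) (k : ℕ) (x : Fin k → C.X) (a : C.carrier) :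
    ((-1 : ℝ) ^ k) • C.d (C.iotaL (List.ofFn x) a) =
      (∑ i : Fin k, ∑ j : Fin k, if (i : ℕ) < (j : ℕ) then ((-1 : ℝ) ^ ((i : ℕ) + (j : ℕ))) •
        C.iotaL (⁅x i, x j⁆ :: (((List.ofFn x).eraseIdx (j : ℕ)).eraseIdx (i : ℕ))) a else 0)
      + (∑ i : Fin k, ((-1 : ℝ) ^ ((i : ℕ) + 1)) •
        C.iotaL ((List.ofFn x).eraseIdx (i : ℕ)) (C.L (x i) a))
      + C.iotaL (List.ofFn x) (C.d a) := by
  induction k generalizing a with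
  | zero => simp [iotaL]
  | succ k ih =>
    have h := ih (fun i => x i.succ) (C.ι (x 0) a)
    rw [pow_succ, mul_smul, List.ofFn_succ, iotaL_cons]
    simp only [neg_smul, one_smul, smul_neg]
    rw [h]
    simp only [Fin.sum_univ_succ, Fin.val_zero, Fin.val_succ, List.eraseIdx_cons_zero,
      List.eraseIdx_cons_succ, iotaL_cons, L_ι, d_ι, map_add, map_sub, smul_add,
      Finset.sum_add_distrib, Nat.add_lt_add_iff_right, Nat.not_lt_zero, if_false,
      Nat.succ_pos, if_true, zero_add]
    have e1 : ∀ (u v w : C.X) (a : C.carrier) (l : List C.X),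
        C.iotaL l (C.ι u (C.ι v a)) = - C.iotaL l (C.ι v (C.ι u a)) := by
      intro u v w a l
      rw [C.ι_ι, map_neg]
    have e2 : (∑ i : Fin k, ∑ j : Fin k, if (i : ℕ) < (j : ℕ) then
        ((-1 : ℝ) ^ ((i : ℕ) + 1 + ((j : ℕ) + 1))) •
        C.iotaL ((((List.ofFn fun i => x i.succ).eraseIdx (j : ℕ)).eraseIdx (i : ℕ)))
          (C.ι (x 0) (C.ι ⁅x i.succ, x j.succ⁆ a)) else 0) =
        - ∑ i : Fin k, ∑ j : Fin k, if (i : ℕ) < (j : ℕ) then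
        ((-1 : ℝ) ^ ((i : ℕ) + (j : ℕ))) •
        C.iotaL ((((List.ofFn fun i => x i.succ).eraseIdx (j : ℕ)).eraseIdx (i : ℕ)))
          (C.ι ⁅x i.succ, x j.succ⁆ (C.ι (x 0) a)) else 0 := by
      simp only [← Finset.sum_neg_distrib]
      refine Finset.sum_congr rfl fun i _ => Finset.sum_congr rfl fun j _ => ?_
      split_ifs
      · rw [C.ι_ι, map_neg, smul_neg]
        congr 2
        ring
      · simp
    have e3 : (∑ i : Fin k, ((-1 : ℝ) ^ ((i : ℕ) + 1 + 1)) •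
        C.iotaL ((List.ofFn fun i => x i.succ).eraseIdx (i : ℕ))
          (C.ι (x 0) (C.L (x i.succ) a))) =
        - ∑ i : Fin k, ((-1 : ℝ) ^ ((i : ℕ) + 1)) •
        C.iotaL ((List.ofFn fun i => x i.succ).eraseIdx (i : ℕ))
          (C.ι (x 0) (C.L (x i.succ) a)) := by
      simp only [← Finset.sum_neg_distrib]
      refine Finset.sum_congr rfl fun i _ => ?_
      rw [← neg_smul]
      congr 1
      ring
    have e4 : (∑ i : Fin k, ((-1 : ℝ) ^ ((i : ℕ) + 1)) •
        C.iotaL ((List.ofFn fun i => x i.succ).eraseIdx (i : ℕ)) (C.ι ⁅x 0, x i.succ⁆ a)) =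
        - ∑ i : Fin k, ((-1 : ℝ) ^ ((i : ℕ) + 1)) •
        C.iotaL ((List.ofFn fun i => x i.succ).eraseIdx (i : ℕ)) (C.ι ⁅x i.succ, x 0⁆ a) := by
      simp only [← Finset.sum_neg_distrib]
      refine Finset.sum_congr rfl fun i _ => ?_
      rw [← lie_skew, map_neg, LinearMap.neg_apply, map_neg, smul_neg]
    rw [e2, e3, e4]
    simp only [pow_one, neg_smul, one_smul]
    abel

variable {𝔤 : Type} [LieRing 𝔤] [LieAlgebra ℝ 𝔤]

lemma lower_update (C : CartanCalculus) (ρ : 𝔤 →ₗ⁅ℝ⁆ C.X) (k : ℕ) (σ : C.carrier)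
    (x : Fin k → 𝔤) (i : Fin k) (a : 𝔤) :
    C.lower ρ k σ (Function.update x i a) =
      C.iotaL ((List.ofFn fun m => ρ (x m)).set i (ρ a)) σ := by
  unfold lower
  congr 2
  apply List.ext_getElem
  · simp
  · intro m h1 h2
    simp only [List.getElem_ofFn, List.getElem_set, Function.update_apply, Fin.ext_iff,
      eq_comm (a := m)]
    split_ifs <;> rfl

lemma lower_multilinear (C : CartanCalculus) (ρ : 𝔤 →ₗ⁅ℝ⁆ C.X) (k : ℕ) (σ : C.carrier) :
    IsMultilinear (C.lower ρ k σ) := by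
  intro x i
  constructor
  · intro a b
    simp only [lower_update, map_add]
    exact C.iotaL_set_add _ _ (by simp) _ _ _
  · intro c a
    simp only [lower_update, map_smul]
    exact C.iotaL_set_smul _ _ (by simp) _ _ _

lemma lower_alternating (C : CartanCalculus) (ρ : 𝔤 →ₗ⁅ℝ⁆ C.X) (k : ℕ) (σ : C.carrier) :
    IsAlternating (C.lower ρ k σ) := by
  intro x i j hij hx
  apply C.iotaL_of_not_nodup
  rw [List.nodup_ofFn]
  intro h
  exact hij (h (by simp [hx]))

lemma lower_deg (C : CartanCalculus) (ρ : 𝔤 →ₗ⁅ℝ⁆ C.X) (k : ℕ) (σ : C.carrier) (N : ℤ)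
    (h : σ ∈ C.deg N) (x : Fin k → 𝔤) : C.lower ρ k σ x ∈ C.deg (N - k) := by
  have := C.iotaL_deg (List.ofFn fun i => ρ (x i)) N σ h
  unfold lower
  simpa using this

lemma lower_listToFun (C : CartanCalculus) (ρ : 𝔤 →ₗ⁅ℝ⁆ C.X) (k : ℕ) (σ : C.carrier)
    (l : List 𝔤) (hl : l.length = k) :
    C.lower ρ k σ (listToFun k l) = C.iotaL (l.map ρ) σ := by
  unfold lower
  congr 2
  apply List.ext_getElem
  · simp [hl]
  · intro m h1 h2
    have : m < l.length := by simpa using h2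
    simp [listToFun, this]

lemma lower_d (C : CartanCalculus) (ρ : 𝔤 →ₗ⁅ℝ⁆ C.X) (k : ℕ) (α : C.carrier)
    (hinv : ∀ x : 𝔤, C.L (ρ x) α = 0) (x : Fin (k + 1) → 𝔤) :
    (∑ i : Fin (k + 1), ∑ j : Fin (k + 1),
        if (i : ℕ) < (j : ℕ) then
          ((-1 : ℝ) ^ ((i : ℕ) + (j : ℕ) + 1)) •
            C.lower ρ k α (listToFun k
              (⁅x i, x j⁆ :: (((List.ofFn x).eraseIdx (j : ℕ)).eraseIdx (i : ℕ))))
        else 0)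
      = ((-1 : ℝ) ^ k) • C.d (C.lower ρ (k + 1) α x) + C.lower ρ (k + 1) (C.d α) x := by
  have h := C.multiCartan (k + 1) (fun i => ρ (x i)) α
  simp only [hinv, map_zero, smul_zero, Finset.sum_const_zero, add_zero] at h
  have e : (∑ i : Fin (k + 1), ∑ j : Fin (k + 1),
        if (i : ℕ) < (j : ℕ) then
          ((-1 : ℝ) ^ ((i : ℕ) + (j : ℕ) + 1)) •
            C.lower ρ k α (listToFun k
              (⁅x i, x j⁆ :: (((List.ofFn x).eraseIdx (j : ℕ)).eraseIdx (i : ℕ))))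
        else 0) = - ∑ i : Fin (k + 1), ∑ j : Fin (k + 1), 
        if (i : ℕ) < (j : ℕ) then ((-1 : ℝ) ^ ((i : ℕ) + (j : ℕ))) •
        C.iotaL (⁅ρ (x i), ρ (x j)⁆ ::
          (((List.ofFn fun i => ρ (x i)).eraseIdx (j : ℕ)).eraseIdx (i : ℕ))) α else 0 := by
    simp only [← Finset.sum_neg_distrib]
    refine Finset.sum_congr rfl fun i _ => Finset.sum_congr rfl fun j _ => ?_
    split_ifs with hij
    · rw [lower_listToFun]
      · have hm : (List.ofFn fun i => ρ (x i)) = (List.ofFn x).map ρ := by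
          rw [List.map_ofFn]; rfl
        rw [hm, List.map_cons, LieHom.map_lie, List.eraseIdx_map, List.eraseIdx_map, pow_succ,
          mul_neg_one, neg_smul]
      · have hi := i.2
        have hj := j.2
        simp only [List.length_cons, List.length_eraseIdx, List.length_ofFn]
        split_ifs <;> omega
    · simp
  rw [e]
  unfold lower
  rw [pow_succ, mul_neg_one, neg_smul] at h
  rw [neg_eq_iff_eq_neg.mp h]
  abel

end CartanCalculus

lemma varsigma_succ (k : ℕ) : varsigma (k + 1) = (-1 : ℝ) ^ (k + 1) * varsigma k := by
  unfold varsigma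
  have : (k + 1) * (k + 1 + 1) / 2 = (k + 1) + k * (k + 1) / 2 := by
    rw [show (k + 1) * (k + 1 + 1) = k * (k + 1) + (k + 1) * 2 by ring,
      Nat.add_mul_div_right _ _ (by norm_num)]
    ring
  rw [this, pow_add]
  ring

/-- gauge shift by an invariant primitive. If `(f₁,…,f_n)` is
a homotopy moment map for `ω` and `α ∈ Ω^n` is invariant, then `ω + dα` is a
closed invariant form and `f'_k := f_k + (-1)^{k-1} ς(k)·α_k` is a homotopy
moment map for `ω + dα`. -/
theorem gauge_shift_momentMap (C : CartanCalculus) {𝔤 : Type} [LieRing 𝔤]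
    [LieAlgebra ℝ 𝔤] (ρ : 𝔤 →ₗ⁅ℝ⁆ C.X) (n : ℕ) (hn : 1 ≤ n) (ω : C.carrier)
    (hω : ω ∈ C.deg ((n : ℤ) + 1)) (hcl : C.d ω = 0)
    (hinv : ∀ x : 𝔤, C.L (ρ x) ω = 0)
    (f : (k : ℕ) → (Fin k → 𝔤) → C.carrier) (hf : IsMomentMap C ρ n ω f)
    (α : C.carrier) (hα : α ∈ C.deg (n : ℤ)) (hαinv : ∀ x : 𝔤, C.L (ρ x) α = 0) :
    C.d (ω + C.d α) = 0 ∧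
    (∀ x : 𝔤, C.L (ρ x) (ω + C.d α) = 0) ∧
    IsMomentMap C ρ n (ω + C.d α)
      (fun k x => f k x + (((-1 : ℝ) ^ (k - 1)) * varsigma k) • C.lower ρ k α x) := by
  obtain ⟨h1, h2, h3, h4⟩ := hf
  have key : ∀ (k : ℕ) (x : Fin (k + 2) → 𝔤),
      (∑ i : Fin (k + 2), ∑ j : Fin (k + 2),
        if (i : ℕ) < (j : ℕ) then
          ((-1 : ℝ) ^ ((i : ℕ) + (j : ℕ) + 1)) •
            (f (k + 1) (listToFun (k + 1)
              (⁅x i, x j⁆ :: (((List.ofFn x).eraseIdx (j : ℕ)).eraseIdx (i : ℕ))))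
              + (((-1 : ℝ) ^ k) * varsigma (k + 1)) • C.lower ρ (k + 1) α (listToFun (k + 1)
              (⁅x i, x j⁆ :: (((List.ofFn x).eraseIdx (j : ℕ)).eraseIdx (i : ℕ)))))
        else 0) =
      (∑ i : Fin (k + 2), ∑ j : Fin (k + 2),
        if (i : ℕ) < (j : ℕ) then
          ((-1 : ℝ) ^ ((i : ℕ) + (j : ℕ) + 1)) •
            f (k + 1) (listToFun (k + 1)
              (⁅x i, x j⁆ :: (((List.ofFn x).eraseIdx (j : ℕ)).eraseIdx (i : ℕ))))
        else 0) + (((-1 : ℝ) ^ (k + 1)) * varsigma (k + 2)) • C.d (C.lower ρ (k + 2) α x)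
        + varsigma (k + 2) • C.lower ρ (k + 2) (C.d α) x := by
    intro k x
    have hs : ((-1 : ℝ) ^ k) * varsigma (k + 1) = varsigma (k + 2) := by
      rw [varsigma_succ (k + 1)]; ring
    have h := congrArg (fun y => varsigma (k + 2) • y) (C.lower_d ρ (k + 1) α hαinv x)
    simp only [smul_add, smul_smul] at h
    rw [mul_comm, add_assoc, mul_comm (_ ^ _) (varsigma (k + 2)), ← h, Finset.smul_sum,
      ← Finset.sum_add_distrib]
    refine Finset.sum_congr rfl fun i _ => ?_
    rw [Finset.smul_sum, ← Finset.sum_add_distrib]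
    refine Finset.sum_congr rfl fun j _ => ?_
    split_ifs
    · rw [mul_comm, hs, smul_add, smul_comm (varsigma (k + 2))]
    · simp
  have hadd : ∀ (k : ℕ) (x : Fin k → 𝔤),
      C.lower ρ k (ω + C.d α) x = C.lower ρ k ω x + C.lower ρ k (C.d α) x := by
    intro k x
    simp [CartanCalculus.lower]
  have hdι : ∀ x : 𝔤, C.d (C.ι (ρ x) α) = - C.ι (ρ x) (C.d α) := by
    intro x
    rw [C.d_ι, hαinv, zero_sub]
  refine ⟨?_, ?_, ?_, ?_, ?_, ?_⟩
  · rw [map_add, hcl, C.d_d, add_zero]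
  · intro x
    rw [map_add, hinv, zero_add]
    simp only [CartanCalculus.L, LinearMap.add_apply, LinearMap.comp_apply, C.d_d, map_zero,
      add_zero]
    rw [← neg_eq_zero, ← map_neg, ← hdι, C.d_d]
  · intro k hk1 hk2
    obtain ⟨a1, a2, a3⟩ := h1 k hk1 hk2
    refine ⟨?_, ?_, ?_⟩
    · intro x i
      obtain ⟨b1, b2⟩ := a1 x i
      obtain ⟨c1, c2⟩ := C.lower_multilinear ρ k α x i
      constructor
      · intro a b
        simp only [b1, c1, smul_add]
        abel
      · intro c a
        simp only [b2, c2, smul_add]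
        rw [smul_comm c]
    · intro x i j hij hx
      simp only [a2 x i j hij hx, C.lower_alternating ρ k α x i j hij hx, smul_zero, add_zero]
    · intro x
      exact Submodule.add_mem _ (a3 x) (Submodule.smul_mem _ _ (C.lower_deg ρ k α n hα x))
  · intro x
    have hv : varsigma 1 = 1 := by norm_num [varsigma]
    have hl : C.lower ρ 1 α (fun _ => x) = C.ι (ρ x) α := by
      simp [CartanCalculus.lower, CartanCalculus.iotaL]
    simp only [map_add, hl, hv, h2, Nat.sub_self, pow_zero, mul_one, one_smul, hdι, neg_add]
  · intro k hk1 hk2 x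
    obtain ⟨k, rfl⟩ : ∃ m, k = m + 2 := ⟨k - 2, by omega⟩
    refine (key k x).trans ?_
    have h := h3 (k + 2) hk1 hk2 x
    refine (congrArg (fun y => y + _ + _) h).trans ?_
    simp only [hadd, map_add, map_smul, smul_add, show k + 2 - 1 = k + 1 from rfl]
    abel
  · intro x
    obtain ⟨k, rfl⟩ : ∃ m, n = m + 1 := ⟨n - 1, by omega⟩
    refine (key k x).trans ?_
    have h0 : C.lower ρ (k + 2) α x = 0 := by
      have := C.lower_deg ρ (k + 2) α _ hα x
      rw [C.deg_neg _ (by push_cast; omega)] at this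
      simpa using this
    rw [h4 x, hadd, h0, map_zero, smul_zero, add_zero, smul_add]
end
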